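/- Suppose (x, X, y, Y₁₂, α) lacks only (P4a) and α₁ = 0. Then X₁₁ > 0 and y₂ − Y₁₂ > 0, and for any α̂₂ ∈ ℝ, the point (x, X, y, Y₁₂, (0, α̂₂)) satisfies (P4a) if and only if α₂⁻ ≤ α̂₂ ≤ α₂⁺. -/

import Mathlib

open Matrix

set_option linter.unusedVariables false

/-- Linear conditions (L). -/
def Lcond (x1 x2 X11 X12 X22 y1 y2 Y12 a1 a2 : ℝ) : Prop :=
  X11 ≤ x1 ∧ x1 ≤ y1 ∧ X22 ≤ x2 ∧ x2 ≤ y2 ∧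
  max 0 (x1 - a1 + x2 - a2 - Y12) ≤ X12 ∧ X12 ≤ min (x1 - a1) (x2 - a2) ∧
  0 ≤ a1 ∧ a1 ≤ y1 - Y12 ∧ 0 ≤ a2 ∧ a2 ≤ y2 - Y12 ∧
  max 0 (y1 + y2 - 1) ≤ Y12 ∧ Y12 ≤ min y1 y2

/-- PSD condition (P3). -/
def P3cond (x1 x2 X11 X12 X22 y1 y2 Y12 a1 a2 : ℝ) : Prop :=
  (!![Y12, x1 - a1, x2 - a2;
      x1 - a1, x1 - a1, X12;
      x2 - a2, X12, x2 - a2] : Matrix (Fin 3) (Fin 3) ℝ).PosSemidef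

/-- PSD condition (P4a). -/
def P4acond (x1 x2 X11 X12 X22 y1 y2 Y12 a1 a2 : ℝ) : Prop :=
  (!![y1 - Y12, 0, a1, 0;
      0, Y12, x1 - a1, x2 - a2;
      a1, x1 - a1, X11, X12;
      0, x2 - a2, X12, x2 - a2] : Matrix (Fin 4) (Fin 4) ℝ).PosSemidef

/-- PSD condition (P4b). -/
def P4bcond (x1 x2 X11 X12 X22 y1 y2 Y12 a1 a2 : ℝ) : Prop :=
  (!![y2 - Y12, 0, 0, a2;
      0, Y12, x1 - a1, x2 - a2;
      0, x1 - a1, x1 - a1, X12;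
      a2, x2 - a2, X12, X22] : Matrix (Fin 4) (Fin 4) ℝ).PosSemidef

/-- PSD condition (P5). -/
def P5cond (x1 x2 X11 X12 X22 y1 y2 Y12 a1 a2 : ℝ) : Prop :=
  (!![y1 - Y12, 0, 0, a1, 0;
      0, y2 - Y12, 0, 0, a2;
      0, 0, Y12, x1 - a1, x2 - a2;
      a1, 0, x1 - a1, X11, X12;
      0, a2, x2 - a2, X12, X22] : Matrix (Fin 5) (Fin 5) ℝ).PosSemidef

/-- (x, X, y, Y₁₂, α) lacks only (P4a): it satisfies (L), (P3), (P4b), (P5)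
but violates (P4a). -/
def LacksOnlyP4a (x1 x2 X11 X12 X22 y1 y2 Y12 a1 a2 : ℝ) : Prop :=
  Lcond x1 x2 X11 X12 X22 y1 y2 Y12 a1 a2 ∧
  P3cond x1 x2 X11 X12 X22 y1 y2 Y12 a1 a2 ∧
  P4bcond x1 x2 X11 X12 X22 y1 y2 Y12 a1 a2 ∧
  P5cond x1 x2 X11 X12 X22 y1 y2 Y12 a1 a2 ∧
  ¬ P4acond x1 x2 X11 X12 X22 y1 y2 Y12 a1 a2

/-- α₂⁻ = x₂ − X₁₂x₁/X₁₁ − (θ + √Δ)/(2X₁₁), where θ = Y₁₂X₁₁ − x₁² and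
Δ = θ(θ + 4X₁₂(x₁ − X₁₂)). -/
noncomputable def alpha2minus (x1 x2 X11 X12 Y12 : ℝ) : ℝ :=
  x2 - X12 * x1 / X11 -
    ((Y12 * X11 - x1 ^ 2) +
      Real.sqrt ((Y12 * X11 - x1 ^ 2) *
        ((Y12 * X11 - x1 ^ 2) + 4 * X12 * (x1 - X12)))) / (2 * X11)

/-- α₂⁺ = x₂ − X₁₂x₁/X₁₁ − (θ − √Δ)/(2X₁₁), where θ = Y₁₂X₁₁ − x₁² and
Δ = θ(θ + 4X₁₂(x₁ − X₁₂)). -/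
noncomputable def alpha2plus (x1 x2 X11 X12 Y12 : ℝ) : ℝ :=
  x2 - X12 * x1 / X11 -
    ((Y12 * X11 - x1 ^ 2) -
      Real.sqrt ((Y12 * X11 - x1 ^ 2) *
        ((Y12 * X11 - x1 ^ 2) + 4 * X12 * (x1 - X12)))) / (2 * X11)

theorem p4a_iff (x1 x2 X11 X12 X22 y1 y2 Y12 b2 : ℝ) :
    P4acond x1 x2 X11 X12 X22 y1 y2 Y12 0 b2 ↔
      0 ≤ y1 - Y12 ∧ ∀ a b c : ℝ, 0 ≤ Y12 * a ^ 2 + 2 * x1 * a * b + 2 * (x2 - b2) * a * c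
        + X11 * b ^ 2 + 2 * X12 * b * c + (x2 - b2) * c ^ 2 := by
  unfold P4acond
  rw [Matrix.posSemidef_iff_dotProduct_mulVec]
  constructor
  · rintro ⟨-, h⟩
    refine ⟨?_, fun a b c => ?_⟩
    · have := h ![1, 0, 0, 0]
      simp [Matrix.mulVec, dotProduct, Fin.sum_univ_succ] at this
      linarith
    · have := h ![0, a, b, c]
      simp [Matrix.mulVec, dotProduct, Fin.sum_univ_succ] at this
      linarith
  · rintro ⟨h0, h⟩
    refine ⟨?_, fun v => ?_⟩
    · ext i j
      fin_cases i <;> fin_cases j <;> simp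
    · have h1 := h (v 1) (v 2) (v 3)
      have h2 := mul_nonneg h0 (sq_nonneg (v 0))
      simp [Matrix.mulVec, dotProduct, Fin.sum_univ_succ]
      have e2 : (Fin.succ 1 : Fin 4) = 2 := rfl
      have e3 : (Fin.succ 2 : Fin 4) = 3 := rfl
      simp only [e2, e3] at *
      linarith

theorem p5_form {x1 x2 X11 X12 X22 y1 y2 Y12 a2 : ℝ}
    (h : P5cond x1 x2 X11 X12 X22 y1 y2 Y12 0 a2) (a b c : ℝ) :
    0 ≤ Y12 * a ^ 2 + 2 * x1 * a * b + 2 * (x2 - a2) * a * c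
        + X11 * b ^ 2 + 2 * X12 * b * c + X22 * c ^ 2 := by
  unfold P5cond at h
  rw [Matrix.posSemidef_iff_dotProduct_mulVec] at h
  have := h.2 ![0, 0, a, b, c]
  simp [Matrix.mulVec, dotProduct, Fin.sum_univ_succ] at this
  linarith

theorem p3_form {x1 x2 X11 X12 X22 y1 y2 Y12 a2 : ℝ}
    (h : P3cond x1 x2 X11 X12 X22 y1 y2 Y12 0 a2) (a c : ℝ) :
    0 ≤ Y12 * a ^ 2 + 2 * (x2 - a2) * a * c + (x2 - a2) * c ^ 2 := by
  unfold P3cond at h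
  rw [Matrix.posSemidef_iff_dotProduct_mulVec] at h
  have := h.2 ![a, 0, c]
  simp [Matrix.mulVec, dotProduct, Fin.sum_univ_succ] at this
  linarith

/-- If `a t² + 2 b t + c ≥ 0` for all `t`, then `b² ≤ a c`. -/
theorem disc_le {a b c : ℝ} (h : ∀ t : ℝ, 0 ≤ a * (t * t) + (2 * b) * t + c) :
    b ^ 2 ≤ a * c := by
  have := discrim_le_zero h
  unfold discrim at this
  linarith

theorem form_iff {Y x X Z t : ℝ} (hX : 0 < X) (hθ : 0 ≤ Y * X - x ^ 2)
    (hc : 0 ≤ Z * (x - Z)) :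
    (∀ a b c : ℝ, 0 ≤ Y * a ^ 2 + 2 * x * a * b + 2 * t * a * c
        + X * b ^ 2 + 2 * Z * b * c + t * c ^ 2) ↔
      (X * t - x * Z) ^ 2 ≤ (Y * X - x ^ 2) * (X * t - x * Z + Z * (x - Z)) := by
  have key : ∀ a b c : ℝ, X * (Y * a ^ 2 + 2 * x * a * b + 2 * t * a * c
        + X * b ^ 2 + 2 * Z * b * c + t * c ^ 2) = (X * b + x * a + Z * c) ^ 2
        + ((Y * X - x ^ 2) * a ^ 2 + 2 * (X * t - x * Z) * a * c
          + (X * t - x * Z + Z * (x - Z)) * c ^ 2) := by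
    intro a b c; ring
  constructor
  · intro h
    apply disc_le
    intro s
    have h1 := mul_nonneg hX.le (h s (-(x * s + Z) / X) 1)
    rw [key] at h1
    have h2 : X * (-(x * s + Z) / X) + x * s + Z * 1 = 0 := by field_simp; ring
    rw [h2] at h1
    linarith
  · intro h a b c
    refine (mul_nonneg_iff_of_pos_left hX).1 ?_
    rw [key]
    set θ := Y * X - x ^ 2
    set u := X * t - x * Z
    set k := Z * (x - Z)
    have : 0 ≤ θ * a ^ 2 + 2 * u * a * c + (u + k) * c ^ 2 := by
      rcases hθ.eq_or_lt with h0 | h0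
      · rw [← h0] at h ⊢
        have hu : u = 0 := by nlinarith
        rw [hu]
        nlinarith [mul_nonneg hc (sq_nonneg c)]
      · refine (mul_nonneg_iff_of_pos_left h0).1 ?_
        nlinarith [sq_nonneg (θ * a + u * c), mul_nonneg (sub_nonneg.2 h) (sq_nonneg c)]
    nlinarith [sq_nonneg (X * b + x * a + Z * c)]

/-- If (x, X, y, Y₁₂, α) lacks only (P4a) and α₁ = 0, then X₁₁ > 0, y₂ − Y₁₂ > 0,
and for any α̂₂, the point with α̂ = (0, α̂₂) satisfies (P4a) iff α₂⁻ ≤ α̂₂ ≤ α₂⁺. -/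
theorem stmt9 (x1 x2 X11 X12 X22 y1 y2 Y12 a2 : ℝ)
    (h : LacksOnlyP4a x1 x2 X11 X12 X22 y1 y2 Y12 0 a2) :
    0 < X11 ∧ 0 < y2 - Y12 ∧
      ∀ b2 : ℝ,
        (P4acond x1 x2 X11 X12 X22 y1 y2 Y12 0 b2 ↔
          alpha2minus x1 x2 X11 X12 Y12 ≤ b2 ∧ b2 ≤ alpha2plus x1 x2 X11 X12 Y12) := by
  obtain ⟨⟨l1, l2, l3, l4, l5, l6, l7, l8, l9, l10, l11, l12⟩, p3, -, p5, np⟩ := h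
  have hy1 : 0 ≤ y1 - Y12 := by linarith
  have f5 := p5_form p5
  have f3 := p3_form p3
  have hZ0 : 0 ≤ X12 := le_trans (le_max_left _ _) l5
  have hZ1 : X12 ≤ x1 := by have := le_trans l6 (min_le_left _ _); linarith
  have hk : 0 ≤ X12 * (x1 - X12) := mul_nonneg hZ0 (by linarith)
  have hX0 : 0 ≤ X11 := by have := f5 0 1 0; linarith
  have hθ : 0 ≤ Y12 * X11 - x1 ^ 2 := by
    have : x1 ^ 2 ≤ Y12 * X11 := disc_le (fun t => by have := f5 t 1 0; linarith)
    linarith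
  rw [p4a_iff] at np
  have hX : 0 < X11 := by
    rcases hX0.eq_or_lt with h0 | h0
    · exfalso
      apply np
      rw [← h0] at hθ
      have hx : x1 = 0 := by nlinarith
      have hz : X12 = 0 := by linarith
      refine ⟨hy1, fun a b c => ?_⟩
      rw [← h0, hx, hz]
      have := f3 a c
      linarith
    · exact h0
  have hy2 : 0 < y2 - Y12 := by
    rcases (l9.trans l10).eq_or_lt with h0 | h0
    · exfalso
      apply np
      have ha : a2 = 0 := by linarith
      refine ⟨hy1, fun a b c => ?_⟩
      have := f5 a b c
      subst ha
      have := mul_nonneg (sub_nonneg.2 l3) (sq_nonneg c)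
      linarith
    · exact h0
  refine ⟨hX, hy2, fun b2 => ?_⟩
  rw [p4a_iff, form_iff hX hθ hk]
  unfold alpha2minus alpha2plus
  set θ := Y12 * X11 - x1 ^ 2
  have hΔ : 0 ≤ θ * (θ + 4 * X12 * (x1 - X12)) := mul_nonneg hθ (by linarith)
  set s := Real.sqrt (θ * (θ + 4 * X12 * (x1 - X12)))
  have hs : s ^ 2 = θ * (θ + 4 * X12 * (x1 - X12)) := Real.sq_sqrt hΔ
  have hs0 : 0 ≤ s := Real.sqrt_nonneg _
  set u := X11 * (x2 - b2) - x1 * X12 with hu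
  have e1 : x2 - X12 * x1 / X11 - (θ + s) / (2 * X11) - b2 = (2 * u - θ - s) / (2 * X11) := by
    rw [hu]; field_simp; ring
  have e2 : x2 - X12 * x1 / X11 - (θ - s) / (2 * X11) - b2 = (2 * u - θ + s) / (2 * X11) := by
    rw [hu]; field_simp; ring
  have hXX : 0 < 2 * X11 := by linarith
  have i1 : x2 - X12 * x1 / X11 - (θ + s) / (2 * X11) ≤ b2 ↔ 2 * u - θ ≤ s := by
    rw [← sub_nonpos, e1, div_le_iff₀ hXX, zero_mul, sub_nonpos]
  have i2 : b2 ≤ x2 - X12 * x1 / X11 - (θ - s) / (2 * X11) ↔ -s ≤ 2 * u - θ := by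
    rw [← sub_nonneg, e2, le_div_iff₀ hXX, zero_mul]
    constructor <;> intro h <;> linarith
  rw [i1, i2, and_comm (a := 2 * u - θ ≤ s), ← abs_le, ← sq_le_sq₀ (abs_nonneg _) hs0, sq_abs, hs]
  constructor
  · rintro ⟨-, h⟩
    nlinarith
  · intro h
    exact ⟨hy1, by nlinarith⟩
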